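/- arXiv:2506.10572 — 2 statements merged into one kernel-verified Lean document; each statement's English description precedes it below -/
import Mathlib

section
/- Let x ∈ ℝ^K and b ∈ U^K be such that b_1/exp(x_1) ≤ ⋯ ≤ b_K/exp(x_K), let y be the maximizer of F_{1,x} over Δ^K ∩ {y : y_i ≤ b_i for all i}, and let ρ ∈ {0,…,K} be such that y_k = b_k for all k ≤ ρ and y_k < b_k for all k > ρ. For k ∈ {0,…,K−1} with s_k := 1 − Σ_{i=1}^{k} b_i > 0, set z_k = (Σ_{i=k+1}^{K} exp(x_i))/s_k. Then for every such k, exp(x_{k+1})/z_k > b_{k+1} implies ρ ≠ k. -/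
/-- The probability simplex Δ^K. -/
def simplex (K : ℕ) : Set (Fin K → ℝ) :=
  {p | (∀ i, 0 ≤ p i) ∧ ∑ i, p i = 1}

/-- The entropic objective F_{τ,x}(y) = Σ x_i y_i − τ Σ y_i log y_i
(Real.log 0 = 0 gives the convention 0·log 0 = 0). -/
noncomputable def F {K : ℕ} (τ : ℝ) (x y : Fin K → ℝ) : ℝ :=
  ∑ i, x i * y i - τ * ∑ i, y i * Real.log (y i)

/-- s_k = 1 − Σ_{i=1}^k b_i (0-based: indices i with i < k). -/
noncomputable def sHead {K : ℕ} (b : Fin K → ℝ) (k : ℕ) : ℝ :=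
  1 - ∑ i ∈ Finset.univ.filter (fun i : Fin K => (i : ℕ) < k), b i

/-- r_k = Σ_{i=k+1}^K exp(x_i) (0-based: indices i with k ≤ i). -/
noncomputable def rTail {K : ℕ} (x : Fin K → ℝ) (k : ℕ) : ℝ :=
  ∑ i ∈ Finset.univ.filter (fun i : Fin K => k ≤ (i : ℕ)), Real.exp (x i)

/-!
Moving mass `ε` from a coordinate `j` to a coordinate `p` with `y p < b p` cannot increase the
objective. The entropy is concave, so its tangent at the *perturbed* point bounds the change; this
point has positive `j`- and `p`-coordinates, so the argument also covers `y p = 0`, where the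
entropy has infinite slope. Letting `ε → 0` shows that `y i / exp (x i / τ)` attains its maximum at
every unsaturated `p`. If `y = b` on `S`, summing over `Sᶜ` yields `exp (x p / τ) / z ≤ y p < b p`,
where `z` is the sum of `exp (x i / τ)` over `Sᶜ` divided by the remaining mass `1 - ∑ i ∈ S, b i`.
-/

open Filter Real Topology

lemma sum_apply_update {ι M : Type*} {α : ι → Type*} [Fintype ι] [DecidableEq ι]
    [AddCommGroup M] (φ : ∀ i, α i → M) (y : ∀ i, α i) (p : ι) (v : α p) :
    ∑ i, φ i (Function.update y p v i) = ∑ i, φ i (y i) + (φ p v - φ p (y p)) := by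
  simp only [Function.apply_update φ]
  rw [Finset.sum_update_of_mem (Finset.mem_univ p),
    Finset.sum_eq_add_sum_sdiff_singleton_of_mem (Finset.mem_univ p) (fun i => φ i (y i))]
  abel

lemma negMulLog_le_tangent {u v : ℝ} (hu : 0 < u) (hv : 0 ≤ v) :
    negMulLog v ≤ negMulLog u - (log u + 1) * (v - u) := by
  obtain ⟨t, ht, rfl⟩ : ∃ t, 0 ≤ t ∧ t * u = v := ⟨v / u, by positivity, by field_simp⟩
  calc negMulLog (t * u) = u * negMulLog t + t * negMulLog u := negMulLog_mul t u
    _ ≤ u * (1 - t) + t * negMulLog u := by gcongr; exact negMulLog_le_one_sub_self ht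
    _ = negMulLog u - (log u + 1) * (t * u - u) := by rw [negMulLog]; ring

lemma mul_exp_le_mul_exp_of_sub_mul_log_le {τ u v s t : ℝ} (hτ : 0 < τ) (hu : 0 < u)
    (hv : 0 < v) (h : s - τ * log v ≤ t - τ * log u) : u * exp (s / τ) ≤ v * exp (t / τ) := by
  rw [← log_le_log_iff (by positivity) (by positivity), log_mul hu.ne' (exp_ne_zero _),
    log_mul hv.ne' (exp_ne_zero _), log_exp, log_exp, ← sub_nonneg]
  have hdiv : log v + t / τ - (log u + s / τ) =
      ((t - τ * log u) - (s - τ * log v)) / τ := by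
    field_simp
    ring
  rw [hdiv]
  exact div_nonneg (sub_nonneg.2 h) hτ.le

section Transfer

variable {ι : Type*} [DecidableEq ι]

/-- The vector obtained from `y` by moving mass `ε` from coordinate `j` to coordinate `p`: the
competitor against which the optimality of `y` is tested. It is meant for `j ≠ p`, since for
`j = p` the second update overrides the first. -/
def transfer (y : ι → ℝ) (j p : ι) (ε : ℝ) : ι → ℝ :=
  Function.update (Function.update y j (y j - ε)) p (y p + ε)

lemma sum_apply_transfer {M : Type*} [Fintype ι] [AddCommGroup M] (φ : ι → ℝ → M) (y : ι → ℝ)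
    {j p : ι} (hjp : j ≠ p) (ε : ℝ) :
    ∑ i, φ i (transfer y j p ε i) =
      ∑ i, φ i (y i) + (φ j (y j - ε) - φ j (y j)) + (φ p (y p + ε) - φ p (y p)) := by
  rw [transfer, sum_apply_update, sum_apply_update, Function.update_of_ne hjp.symm]

end Transfer

/-- The feasible set `Δ^K ∩ {z : z i ≤ b i for all i}` of the upper-bounded problem. -/
def cappedSimplex {K : ℕ} (b : Fin K → ℝ) : Set (Fin K → ℝ) :=
  {z | z ∈ simplex K ∧ ∀ i, z i ≤ b i}

section Optimality

variable {K : ℕ} {τ ε : ℝ} {x b y : Fin K → ℝ} {j p : Fin K}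

lemma transfer_mem_cappedSimplex (hy : y ∈ cappedSimplex b) (hjp : j ≠ p) (hε : 0 ≤ ε)
    (hεj : ε ≤ y j) (hεp : y p + ε ≤ b p) : transfer y j p ε ∈ cappedSimplex b := by
  obtain ⟨⟨hnonneg, hsum⟩, hle⟩ := hy
  refine ⟨⟨?_, ?_⟩, ?_⟩
  · change 0 ≤ transfer y j p ε
    exact le_update_iff.2 ⟨add_nonneg (hnonneg p) hε, fun i _ =>
      (le_update_iff (x := 0)).2 ⟨sub_nonneg.2 hεj, fun i _ => hnonneg i⟩ i⟩
  · rw [sum_apply_transfer (fun _ t => t) y hjp, hsum]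
    ring
  · change transfer y j p ε ≤ b
    exact update_le_iff.2 ⟨hεp, fun i _ =>
      update_le_iff.2 ⟨(sub_le_self _ hε).trans (hle j), fun i _ => hle i⟩ i⟩

lemma F_eq_sum_negMulLog (τ : ℝ) (x y : Fin K → ℝ) :
    F τ x y = ∑ i, (x i * y i + τ * negMulLog (y i)) := by
  simp only [F, negMulLog, Finset.sum_add_distrib, ← Finset.mul_sum, neg_mul,
    Finset.sum_neg_distrib, mul_neg, sub_eq_add_neg]

lemma F_add_le_F_transfer (hτ : 0 ≤ τ) (hj : 0 ≤ y j) (hp : 0 ≤ y p) (hjp : j ≠ p)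
    (hεj : 0 < y j - ε) (hεp : 0 < y p + ε) :
    F τ x y + ε * ((x p - τ * log (y p + ε)) - (x j - τ * log (y j - ε))) ≤
      F τ x (transfer y j p ε) := by
  have tangent_j := mul_le_mul_of_nonneg_left (negMulLog_le_tangent hεj hj) hτ
  have tangent_p := mul_le_mul_of_nonneg_left (negMulLog_le_tangent hεp hp) hτ
  rw [F_eq_sum_negMulLog, F_eq_sum_negMulLog,
    sum_apply_transfer (fun i t => x i * t + τ * negMulLog t) y hjp]
  linarith

lemma sub_mul_exp_le_add_mul_exp_of_isMaxOn (hτ : 0 < τ) (hy : y ∈ cappedSimplex b)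
    (hmax : IsMaxOn (F τ x) (cappedSimplex b) y) (hjp : j ≠ p) (hε : 0 < ε)
    (hεp : y p + ε ≤ b p) :
    (y j - ε) * exp (x p / τ) ≤ (y p + ε) * exp (x j / τ) := by
  have hp_pos : 0 < y p + ε := add_pos_of_nonneg_of_pos (hy.1.1 p) hε
  rcases le_or_gt (y j - ε) 0 with hj | hj
  · exact (mul_nonpos_of_nonpos_of_nonneg hj (exp_pos _).le).trans (by positivity)
  · have no_gain : F τ x (transfer y j p ε) ≤ F τ x y :=
      hmax (transfer_mem_cappedSimplex hy hjp hε.le (sub_pos.1 hj).le hεp)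
    have gain := F_add_le_F_transfer (x := x) hτ.le (hy.1.1 j) (hy.1.1 p) hjp hj hp_pos
    refine mul_exp_le_mul_exp_of_sub_mul_log_le hτ hj hp_pos (sub_nonpos.1 ?_)
    exact nonpos_of_mul_nonpos_right (by linarith) hε

lemma mul_exp_le_mul_exp_of_isMaxOn (hτ : 0 < τ) (hy : y ∈ cappedSimplex b)
    (hmax : IsMaxOn (F τ x) (cappedSimplex b) y) (hp : y p < b p) (j : Fin K) :
    y j * exp (x p / τ) ≤ y p * exp (x j / τ) := by
  rcases eq_or_ne j p with rfl | hjp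
  · rfl
  have hleft : Tendsto (fun ε => (y j - ε) * exp (x p / τ)) (𝓝[>] 0)
      (𝓝 ((y j - 0) * exp (x p / τ))) :=
    (Continuous.tendsto (by fun_prop) 0).mono_left nhdsWithin_le_nhds
  have hright : Tendsto (fun ε => (y p + ε) * exp (x j / τ)) (𝓝[>] 0)
      (𝓝 ((y p + 0) * exp (x j / τ))) :=
    (Continuous.tendsto (by fun_prop) 0).mono_left nhdsWithin_le_nhds
  rw [sub_zero] at hleft
  rw [add_zero] at hright
  refine le_of_tendsto_of_tendsto hleft hright ?_
  filter_upwards [Ioc_mem_nhdsGT (sub_pos.2 hp)] with ε hε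
  exact sub_mul_exp_le_add_mul_exp_of_isMaxOn hτ hy hmax hjp hε.1 (by linarith [hε.2])

lemma sum_compl_eq_one_sub_sum {S : Finset (Fin K)} (hy : y ∈ simplex K)
    (hS : ∀ i ∈ S, y i = b i) : ∑ i ∈ Sᶜ, y i = 1 - ∑ i ∈ S, b i := by
  rw [← Finset.sum_congr rfl hS, ← hy.2, ← Finset.sum_add_sum_compl S y, add_sub_cancel_left]

lemma one_sub_sum_mul_exp_le_of_isMaxOn {S : Finset (Fin K)} (hτ : 0 < τ)
    (hy : y ∈ cappedSimplex b) (hmax : IsMaxOn (F τ x) (cappedSimplex b) y)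
    (hS : ∀ i ∈ S, y i = b i) (hp : y p < b p) :
    (1 - ∑ i ∈ S, b i) * exp (x p / τ) ≤ y p * ∑ i ∈ Sᶜ, exp (x i / τ) := by
  rw [← sum_compl_eq_one_sub_sum hy.1 hS, Finset.sum_mul, Finset.mul_sum]
  exact Finset.sum_le_sum fun j _ => mul_exp_le_mul_exp_of_isMaxOn hτ hy hmax hp j

theorem ubsoftmax_threshold_excludes_general {S : Finset (Fin K)} (hτ : 0 < τ)
    (hy : y ∈ cappedSimplex b) (hmax : IsMaxOn (F τ x) (cappedSimplex b) y)
    (hS : ∀ i ∈ S, y i = b i) (hs : 0 < 1 - ∑ i ∈ S, b i)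
    (hlt : b p < exp (x p / τ) / ((∑ i ∈ Sᶜ, exp (x i / τ)) / (1 - ∑ i ∈ S, b i))) :
    y p = b p := by
  by_contra hne
  have hp : y p < b p := (hy.2 p).lt_of_ne hne
  have hcompl : Sᶜ.Nonempty := by
    rw [← sum_compl_eq_one_sub_sum hy.1 hS] at hs
    exact Finset.nonempty_of_sum_ne_zero hs.ne'
  have hr : 0 < ∑ i ∈ Sᶜ, exp (x i / τ) := Finset.sum_pos (fun i _ => exp_pos _) hcompl
  have hle : exp (x p / τ) / ((∑ i ∈ Sᶜ, exp (x i / τ)) / (1 - ∑ i ∈ S, b i)) ≤ y p := by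
    rw [div_div_eq_mul_div, div_le_iff₀ hr, mul_comm (exp _)]
    exact one_sub_sum_mul_exp_le_of_isMaxOn hτ hy hmax hS hp
  exact (hp.trans hlt).not_ge hle

end Optimality

/-- with b_i/exp(x_i) nondecreasing and threshold ρ for the
maximizer of the upper-bounded problem: for every k ∈ {0,…,K−1} with s_k > 0,
if exp(x_{k+1})/z_k > b_{k+1} (z_k = r_k/s_k) then ρ ≠ k. -/
theorem ubsoftmax_threshold_excludes
    (K : ℕ) (hK : 1 ≤ K) (x b : Fin K → ℝ)
    (hb : ∀ i, 0 < b i ∧ b i ≤ 1) (hbsum : 1 ≤ ∑ i, b i)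
    (hsorted : ∀ i j : Fin K, i ≤ j → b i / Real.exp (x i) ≤ b j / Real.exp (x j))
    (y : Fin K → ℝ)
    (hy : y ∈ simplex K ∧ ∀ i, y i ≤ b i)
    (hymax : ∀ z, (z ∈ simplex K ∧ ∀ i, z i ≤ b i) → F 1 x z ≤ F 1 x y)
    (ρ : ℕ) (hρ : ρ ≤ K)
    (hsat : ∀ k : Fin K, (k : ℕ) < ρ → y k = b k)
    (hfree : ∀ k : Fin K, ρ ≤ (k : ℕ) → y k < b k) :
    ∀ k, ∀ hk : k < K, 0 < sHead b k →
      b ⟨k, hk⟩ < Real.exp (x ⟨k, hk⟩) / (rTail x k / sHead b k) → ρ ≠ k := by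
  rintro k hk hs hlt rfl
  refine (hfree ⟨ρ, hk⟩ le_rfl).ne (ubsoftmax_threshold_excludes_general
    (S := {i : Fin K | (i : ℕ) < ρ}) one_pos hy hymax (by simpa using hsat) hs ?_)
  simpa [rTail, sHead, Finset.compl_filter] using hlt
end

section
/- Let x ∈ ℝ^K and b ∈ U^K be such that b_1/exp(x_1) ≤ ⋯ ≤ b_K/exp(x_K), and let k ∈ {0,…,K−1} satisfy s_k := 1 − Σ_{i=1}^{k} b_i > 0; set z_k = (Σ_{i=k+1}^{K} exp(x_i))/s_k. If exp(x_{k+1})/z_k ≤ b_{k+1}, then exp(x_i)/z_k ≤ b_i for all i > k; consequently the vector y(k) ∈ ℝ^K defined by y(k)_i = b_i for i ≤ k and y(k)_i = exp(x_i)/z_k for i > k satisfies y(k) ∈ Δ^K and 0 ≤ y(k)_i ≤ b_i for all i, i.e. y(k) is a feasible point of the upper-bounded problem. -/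
/-
The bound at the critical index says `1 / z ≤ b k / w k`. Since `k` minimizes `b / w` off the
saturated set `S`, the same bound `1 / z ≤ b i / w i` holds at every unsaturated index, and `z` is
exactly the constant for which the values `w i / z` off `S` add up to the mass `1 - ∑ i ∈ S, b i`.
-/

open Finset

theorem div_le_of_div_le_of_div_le_div {𝕜 : Type*} [Field 𝕜] [LinearOrder 𝕜]
    [IsStrictOrderedRing 𝕜] {u v a c z : 𝕜} (hu : 0 < u) (hv : 0 < v) (hua : u / z ≤ a)
    (hratio : a / u ≤ c / v) : v / z ≤ c :=
  calc
    v / z = u / z / u * v := by field_simp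
    _ ≤ a / u * v := by gcongr
    _ ≤ c / v * v := by gcongr
    _ = c := div_mul_cancel₀ c hv.ne'

section SaturatedCandidate

variable {ι 𝕜 : Type*} [Fintype ι] [DecidableEq ι] [Field 𝕜]

/-- The constant `z` by which the weights `w` outside the saturated set `S` are divided so that they
share the mass `1 - ∑ i ∈ S, b i` left over by the caps `b` on `S`. It is the `z_k` of the paper
when `S` consists of the first `k` indices and `w i = exp (x i)`. -/
def saturatedNormalizer (S : Finset ι) (w b : ι → 𝕜) : 𝕜 :=
  (∑ i ∈ Sᶜ, w i) / (1 - ∑ i ∈ S, b i)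

/-- The candidate solution that sits at the cap `b` on the saturated set `S` and is proportional to
the weights `w` elsewhere; the paper's `y(k)`. -/
def saturatedCandidate (S : Finset ι) (w b : ι → 𝕜) (i : ι) : 𝕜 :=
  if i ∈ S then b i else w i / saturatedNormalizer S w b

variable {S : Finset ι} {w b : ι → 𝕜}

theorem sum_saturatedCandidate (hw : ∑ i ∈ Sᶜ, w i ≠ 0) :
    ∑ i, saturatedCandidate S w b i = 1 := by
  have head : ∑ i ∈ S, saturatedCandidate S w b i = ∑ i ∈ S, b i :=
    sum_congr rfl fun i hi => if_pos hi
  have tail : ∑ i ∈ Sᶜ, saturatedCandidate S w b i = 1 - ∑ i ∈ S, b i :=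
    calc
      ∑ i ∈ Sᶜ, saturatedCandidate S w b i
          = ∑ i ∈ Sᶜ, w i / saturatedNormalizer S w b :=
        sum_congr rfl fun i hi => if_neg (mem_compl.mp hi)
      _ = (∑ i ∈ Sᶜ, w i) / saturatedNormalizer S w b := (sum_div ..).symm
      _ = 1 - ∑ i ∈ S, b i := div_div_cancel₀ hw
  rw [← sum_add_sum_compl S, head, tail, add_sub_cancel]

theorem saturatedCandidate_le [Preorder 𝕜]
    (h : ∀ i ∉ S, w i / saturatedNormalizer S w b ≤ b i) (i : ι) :
    saturatedCandidate S w b i ≤ b i := by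
  unfold saturatedCandidate
  split_ifs with hi
  · exact le_rfl
  · exact h i hi

variable [LinearOrder 𝕜] [IsStrictOrderedRing 𝕜]

theorem saturatedCandidate_nonneg (hb : ∀ i ∈ S, 0 ≤ b i) (hw : ∀ i ∉ S, 0 ≤ w i)
    (hs : 0 < 1 - ∑ i ∈ S, b i) (i : ι) : 0 ≤ saturatedCandidate S w b i := by
  unfold saturatedCandidate
  split_ifs with hi
  · exact hb i hi
  · have tail_nonneg : 0 ≤ ∑ j ∈ Sᶜ, w j := sum_nonneg fun j hj => hw j (mem_compl.mp hj)
    exact div_nonneg (hw i hi) (div_nonneg tail_nonneg hs.le)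

theorem ubsoftmax_candidate_feasible_general {k : ι} (hk : k ∉ S) (hb : ∀ i ∈ S, 0 ≤ b i)
    (hw : ∀ i ∉ S, 0 < w i) (hratio : ∀ i ∉ S, b k / w k ≤ b i / w i)
    (hs : 0 < 1 - ∑ i ∈ S, b i) (hcond : w k / saturatedNormalizer S w b ≤ b k) :
    (∀ i ∉ S, w i / saturatedNormalizer S w b ≤ b i) ∧
      saturatedCandidate S w b ∈ stdSimplex 𝕜 ι ∧
      ∀ i, 0 ≤ saturatedCandidate S w b i ∧ saturatedCandidate S w b i ≤ b i := by
  have tail_le : ∀ i ∉ S, w i / saturatedNormalizer S w b ≤ b i := fun i hi =>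
    div_le_of_div_le_of_div_le_div (hw k hk) (hw i hi) hcond (hratio i hi)
  have nonneg := saturatedCandidate_nonneg hb (fun i hi => (hw i hi).le) hs
  have tail_pos : 0 < ∑ i ∈ Sᶜ, w i :=
    sum_pos (fun i hi => hw i (mem_compl.mp hi)) ⟨k, mem_compl.mpr hk⟩
  exact ⟨tail_le, ⟨nonneg, sum_saturatedCandidate tail_pos.ne'⟩,
    fun i => ⟨nonneg i, saturatedCandidate_le tail_le i⟩⟩

end SaturatedCandidate

theorem simplex_eq_stdSimplex (K : ℕ) : simplex K = stdSimplex ℝ (Fin K) :=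
  rfl

section InitialSegment

variable {K : ℕ} (x b : Fin K → ℝ) (k : ℕ)

theorem saturatedNormalizer_filter_lt :
    saturatedNormalizer {i : Fin K | (i : ℕ) < k} (fun i => Real.exp (x i)) b =
      rTail x k / sHead b k := by
  simp only [saturatedNormalizer, rTail, sHead, compl_filter, not_lt]

theorem saturatedCandidate_filter_lt :
    saturatedCandidate {i : Fin K | (i : ℕ) < k} (fun i => Real.exp (x i)) b =
      fun i : Fin K => if (i : ℕ) < k then b i else Real.exp (x i) / (rTail x k / sHead b k) := by
  ext i
  simp only [saturatedCandidate, saturatedNormalizer_filter_lt, mem_filter_univ]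

end InitialSegment

/-- with b_i/exp(x_i) nondecreasing, k ∈ {0,…,K−1}, s_k > 0 and
z_k = r_k/s_k, if exp(x_{k+1})/z_k ≤ b_{k+1} then exp(x_i)/z_k ≤ b_i for all
i > k, and the vector y(k) (first k coordinates at b, the rest exp(x_i)/z_k)
is a feasible point of the upper-bounded problem: y(k) ∈ Δ^K and
0 ≤ y(k)_i ≤ b_i for all i. -/
theorem ubsoftmax_candidate_feasible
    (K : ℕ) (hK : 1 ≤ K) (x b : Fin K → ℝ)
    (hb : ∀ i, 0 < b i ∧ b i ≤ 1) (hbsum : 1 ≤ ∑ i, b i)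
    (hsorted : ∀ i j : Fin K, i ≤ j → b i / Real.exp (x i) ≤ b j / Real.exp (x j))
    (k : ℕ) (hk : k < K) (hs : 0 < sHead b k)
    (hcond : Real.exp (x ⟨k, hk⟩) / (rTail x k / sHead b k) ≤ b ⟨k, hk⟩) :
    (∀ i : Fin K, k ≤ (i : ℕ) → Real.exp (x i) / (rTail x k / sHead b k) ≤ b i) ∧
    (fun i : Fin K =>
        if (i : ℕ) < k then b i else Real.exp (x i) / (rTail x k / sHead b k)) ∈
      simplex K ∧
    ∀ i : Fin K,
      0 ≤ (if (i : ℕ) < k then b i else Real.exp (x i) / (rTail x k / sHead b k)) ∧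
      (if (i : ℕ) < k then b i else Real.exp (x i) / (rTail x k / sHead b k)) ≤ b i := by
  have ratio_le : ∀ i ∉ ({i : Fin K | (i : ℕ) < k} : Finset (Fin K)),
      b ⟨k, hk⟩ / Real.exp (x ⟨k, hk⟩) ≤ b i / Real.exp (x i) := fun i hi =>
    hsorted ⟨k, hk⟩ i (by simpa [Fin.le_def] using hi)
  rw [← saturatedNormalizer_filter_lt] at hcond
  simpa only [mem_filter_univ, not_lt, saturatedNormalizer_filter_lt,
    saturatedCandidate_filter_lt, simplex_eq_stdSimplex] using
    ubsoftmax_candidate_feasible_general (w := fun i => Real.exp (x i)) (by simp)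
      (fun i _ => (hb i).1.le) (fun i _ => Real.exp_pos (x i)) ratio_le hs hcond
end
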